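/- arXiv:2207.09826 — 3 statements merged into one kernel-verified Lean document; each statement's English description precedes it below -/
import Mathlib

section
/- Let V be a finite type and let w be a weight function on V whose support graph (the simple graph in which u and v are adjacent iff w u v ≠ 0) is not bipartite. Then the real matrices L_w and Q_w have different ranks, and consequently there is no unitary complex V×V matrix U with Q_w = U · L_w · U†; in particular the trace-normalized states L_w/tr L_w and Q_w/tr Q_w are not unitarily equivalent. -/
open Matrix

/-- Adjacency matrix of a weight function. -/
def adjW {V : Type*} (w : V → V → ℝ) : Matrix V V ℝ := Matrix.of w

/-- Degree matrix of a weight function. -/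
noncomputable def degW {V : Type*} [Fintype V] [DecidableEq V] (w : V → V → ℝ) :
    Matrix V V ℝ :=
  Matrix.diagonal fun v => ∑ u, w v u

/-!
The quadratic form of `degW w + s • adjW w`, for `s = ±1`, is half the sum of the terms
`w u v * (f u + s * f v) ^ 2`. Hence the kernel of `L_w` consists of the functions that are constant
along edges, and the kernel of `Q_w` of those that change sign along edges. Replacing `f v` by the
value of `f` at a chosen representative of the connected component of `v` embeds the second kernel
into the first. If the constant function `1` lies in the image, then its preimage takes the values
`±1` and is a bipartition; so for a non-bipartite support graph `L_w` has the larger kernel, and the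
smaller rank. Rank is invariant under scaling, complexification and unitary conjugation.
-/

section RankAndTrace

variable {n K L : Type*} [Fintype n] [Field K] [Field L]

lemma rank_lt_rank_of_finrank_ker_lt {l m : Type*} {M : Matrix l n K} {N : Matrix m n K}
    (h : Module.finrank K (LinearMap.ker N.mulVecLin) <
      Module.finrank K (LinearMap.ker M.mulVecLin)) : M.rank < N.rank := by
  have hM := LinearMap.finrank_range_add_finrank_ker M.mulVecLin
  have hN := LinearMap.finrank_range_add_finrank_ker N.mulVecLin
  unfold Matrix.rank
  omega

lemma trace_map_ringHom_ne_zero (f : K →+* L) {M : Matrix n n K} (hM : M.trace ≠ 0) :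
    (M.map f).trace ≠ 0 := by
  rw [← AddMonoidHom.map_trace f M]
  exact (map_ne_zero f).2 hM

lemma rank_mul_mul_of_isUnit [DecidableEq n] {R : Type*} [CommRing R] {P Q : Matrix n n R}
    (hP : IsUnit P) (hQ : IsUnit Q) (M : Matrix n n R) : (P * M * Q).rank = M.rank := by
  rw [rank_mul_eq_left_of_isUnit_det _ _ ((isUnit_iff_isUnit_det _).1 hQ),
    rank_mul_eq_right_of_isUnit_det _ _ ((isUnit_iff_isUnit_det _).1 hP)]

lemma rank_map_ringHom (f : K →+* L) (M : Matrix n n K) : (M.map f).rank = M.rank := by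
  classical
  obtain ⟨P, Q, e, hP, hQ, hPMQ⟩ := exists_rank_normal_form M
  have hdiag : P * M * Q = diagonal (Sum.elim (fun _ => 1) (fun _ => 0) ∘ e) := by
    rw [hPMQ, ← diagonal_one, ← diagonal_zero, fromBlocks_diagonal, submatrix_diagonal_equiv]
  calc (M.map f).rank = (P.map f * M.map f * Q.map f).rank :=
        (rank_mul_mul_of_isUnit (hP.map f.mapMatrix) (hQ.map f.mapMatrix) _).symm
    _ = ((P * M * Q).map f).rank := by rw [Matrix.map_mul, Matrix.map_mul]
    _ = (P * M * Q).rank := by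
        rw [hdiag, diagonal_map (map_zero f), rank_diagonal, rank_diagonal]
        simp only [Function.comp_apply, ne_eq, map_eq_zero]
    _ = M.rank := rank_mul_mul_of_isUnit hP hQ M

lemma rank_eq_of_smul_map_eq_mul_smul_map_mul [DecidableEq n] (f : K →+* L)
    {M N : Matrix n n K} {a b : L} (ha : a ≠ 0) (hb : b ≠ 0) {P Q : Matrix n n L}
    (hP : IsUnit P) (hQ : IsUnit Q) (h : a • M.map f = P * (b • N.map f) * Q) :
    M.rank = N.rank := by
  calc M.rank = (a • M.map f).rank := by
        rw [rank_smul_of_mem_nonZeroDivisors _ (mem_nonZeroDivisors_of_ne_zero ha),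
          rank_map_ringHom]
    _ = (b • N.map f).rank := by rw [h, rank_mul_mul_of_isUnit hP hQ]
    _ = N.rank := by
        rw [rank_smul_of_mem_nonZeroDivisors _ (mem_nonZeroDivisors_of_ne_zero hb),
          rank_map_ringHom]

end RankAndTrace

section TwistedFunctions

variable {V R : Type*} [CommRing R] {r : V → V → Prop}

/-- A chosen representative of the class of `v` under the equivalence relation generated by `r`
(its connected component, when `r` is the adjacency relation of a graph). -/
noncomputable def classRep (r : V → V → Prop) (v : V) : V := (Quot.mk r v).out

lemma classRep_eq_of_rel {u v : V} (huv : r u v) : classRep r u = classRep r v :=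
  congrArg Quot.out (Quot.sound huv)

lemma apply_classRep {α : Type*} {g : V → α} (hg : ∀ u v, r u v → g u = g v) (v : V) :
    g (classRep r v) = g v :=
  congrArg (Quot.lift g hg) (Quot.out_eq (Quot.mk r v))

/-- The functions that get multiplied by `s` along every edge of `r`: constant on connected
components for `s = 1`, alternating in sign for `s = -1`. -/
def twistedFunctions (r : V → V → Prop) (s : R) : Submodule R (V → R) where
  carrier := {f | ∀ u v, r u v → f u = s * f v}
  add_mem' hf hg u v huv := by simp only [Pi.add_apply, hf u v huv, hg u v huv, mul_add]
  zero_mem' _ _ _ := by simp only [Pi.zero_apply, mul_zero]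
  smul_mem' a f hf u v huv := by
    simp only [Pi.smul_apply, smul_eq_mul, hf u v huv, mul_left_comm]

lemma mem_twistedFunctions {s : R} {f : V → R} :
    f ∈ twistedFunctions r s ↔ ∀ u v, r u v → f u = s * f v := Iff.rfl

lemma sq_apply_classRep {f : V → R} (hf : f ∈ twistedFunctions r (-1)) (v : V) :
    f (classRep r v) ^ 2 = f v ^ 2 :=
  apply_classRep (g := fun v => f v ^ 2) (fun u v huv => by
    rw [mem_twistedFunctions.1 hf u v huv, neg_one_mul, neg_sq]) v

lemma exists_bool_coloring_of_sq_eq_one [NoZeroDivisors R] [NeZero (2 : R)]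
    {f : V → R} (hf : f ∈ twistedFunctions r (-1)) (hsq : ∀ v, f v ^ 2 = 1) :
    ∃ c : V → Bool, ∀ u v, r u v → c u ≠ c v := by
  classical
  have one_ne_neg_one : (1 : R) ≠ -1 := fun h =>
    two_ne_zero (α := R) (by linear_combination h)
  refine ⟨fun v => decide (f v = 1), fun u v huv => ?_⟩
  have hneg : f u = -f v := by rw [mem_twistedFunctions.1 hf u v huv, neg_one_mul]
  rcases sq_eq_one_iff.1 (hsq v) with hv | hv <;>
    simp [hneg, hv, one_ne_neg_one.symm]

lemma range_funLeft_classRep_le :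
    LinearMap.range (LinearMap.funLeft R R (classRep r)) ≤ twistedFunctions r 1 := by
  rintro _ ⟨f, rfl⟩ u v huv
  simp only [LinearMap.funLeft_apply, classRep_eq_of_rel huv, one_mul]

lemma funLeft_classRep_injOn [IsReduced R] :
    Set.InjOn (LinearMap.funLeft R R (classRep r)) (twistedFunctions r (-1 : R)) := by
  rw [← LinearMap.disjoint_ker_iff_injOn, LinearMap.disjoint_ker]
  intro f hf hzero
  ext v
  have hrep : f (classRep r v) = 0 := congrFun hzero v
  rw [Pi.zero_apply, ← sq_eq_zero_iff, ← sq_apply_classRep hf, hrep, sq, zero_mul]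

lemma finrank_twistedFunctions_neg_one_lt {K : Type*} [Field K] [NeZero (2 : K)] [Finite V]
    (hr : ¬ ∃ c : V → Bool, ∀ u v, r u v → c u ≠ c v) :
    Module.finrank K (twistedFunctions r (-1 : K)) <
      Module.finrank K (twistedFunctions r (1 : K)) := by
  set T := LinearMap.funLeft K K (classRep r)
  have map_le_one : (twistedFunctions r (-1)).map T ≤ twistedFunctions r 1 :=
    LinearMap.map_le_range.trans range_funLeft_classRep_le
  have one_mem : (1 : V → K) ∈ twistedFunctions r 1 := fun _ _ _ => (one_mul 1).symm
  have one_notMem : (1 : V → K) ∉ (twistedFunctions r (-1)).map T := by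
    rintro ⟨f, hf, hone⟩
    refine hr (exists_bool_coloring_of_sq_eq_one hf fun v => ?_)
    have hrep : f (classRep r v) = 1 := congrFun hone v
    rw [← sq_apply_classRep hf, hrep, one_pow]
  calc Module.finrank K (twistedFunctions r (-1 : K))
      = Module.finrank K ((twistedFunctions r (-1)).map T) := by
        rw [← LinearMap.range_domRestrict, LinearMap.finrank_range_of_inj
          (Set.injOn_iff_injective.1 funLeft_classRep_injOn)]
    _ < Module.finrank K (twistedFunctions r (1 : K)) :=
        Submodule.finrank_lt_finrank_of_lt
          (SetLike.lt_iff_le_and_exists.2 ⟨map_le_one, 1, one_mem, one_notMem⟩)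

end TwistedFunctions

lemma sum_sum_eq_zero_iff_of_nonneg {ι κ M : Type*} [Fintype ι] [Fintype κ] [AddCommMonoid M]
    [PartialOrder M] [IsOrderedAddMonoid M] {a : ι → κ → M} (ha : ∀ i j, 0 ≤ a i j) :
    ∑ i, ∑ j, a i j = 0 ↔ ∀ i j, a i j = 0 := by
  rw [Fintype.sum_eq_zero_iff_of_nonneg fun i => Finset.sum_nonneg fun j _ => ha i j, funext_iff]
  refine forall_congr' fun i => ?_
  rw [Pi.zero_apply, Fintype.sum_eq_zero_iff_of_nonneg (ha i), funext_iff]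
  rfl

section Laplacians

variable {V : Type*} [Fintype V] {w : V → V → ℝ}

lemma trace_adjW (hw_diag : ∀ v, w v v = 0) : (adjW w).trace = 0 :=
  Finset.sum_eq_zero fun v _ => hw_diag v

variable [DecidableEq V]

lemma degW_add_smul_adjW_mulVec_apply (w : V → V → ℝ) (s : ℝ) (f : V → ℝ) (u : V) :
    ((degW w + s • adjW w) *ᵥ f) u = ∑ v, w u v * (f u + s * f v) := by
  calc ((degW w + s • adjW w) *ᵥ f) u = (∑ v, w u v) * f u + s * ∑ v, w u v * f v := by
        rw [add_mulVec, smul_mulVec, Pi.add_apply, degW, mulVec_diagonal]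
        rfl
    _ = ∑ v, w u v * (f u + s * f v) := by
        simp only [mul_add, Finset.sum_add_distrib, Finset.sum_mul, Finset.mul_sum, mul_left_comm]

lemma sum_sum_mul_add_sq_eq_two_mul_dotProduct_mulVec (hw_symm : ∀ u v, w u v = w v u)
    {s : ℝ} (hs : s ^ 2 = 1) (f : V → ℝ) :
    ∑ u, ∑ v, w u v * (f u + s * f v) ^ 2 = 2 * (f ⬝ᵥ (degW w + s • adjW w) *ᵥ f) := by
  have hform : f ⬝ᵥ (degW w + s • adjW w) *ᵥ f =
      ∑ u, ∑ v, w u v * (f u * (f u + s * f v)) := by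
    simp only [dotProduct, degW_add_smul_adjW_mulVec_apply, Finset.mul_sum, mul_left_comm]
  have hswap : ∑ u, ∑ v, w u v * (f u * (f u + s * f v)) =
      ∑ u, ∑ v, w u v * (f v * (f v + s * f u)) := by
    rw [Finset.sum_comm]
    simp only [hw_symm]
  calc ∑ u, ∑ v, w u v * (f u + s * f v) ^ 2
      = ∑ u, ∑ v, (w u v * (f u * (f u + s * f v)) + w u v * (f v * (f v + s * f u))) :=
        Finset.sum_congr rfl fun u _ => Finset.sum_congr rfl fun v _ => by
          linear_combination w u v * f v ^ 2 * hs
    _ = 2 * (f ⬝ᵥ (degW w + s • adjW w) *ᵥ f) := by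
        simp only [Finset.sum_add_distrib]
        rw [← hswap, ← hform, two_mul]

lemma ker_degW_add_smul_adjW (hw_symm : ∀ u v, w u v = w v u) (hw_nonneg : ∀ u v, 0 ≤ w u v)
    {s : ℝ} (hs : s ^ 2 = 1) :
    LinearMap.ker (degW w + s • adjW w).mulVecLin =
      twistedFunctions (fun u v => w u v ≠ 0) (-s) := by
  ext f
  simp only [LinearMap.mem_ker, mulVecLin_apply, mem_twistedFunctions, neg_mul,
    eq_neg_iff_add_eq_zero]
  constructor
  · intro hf u v huv
    have hsum : ∑ u, ∑ v, w u v * (f u + s * f v) ^ 2 = 0 := by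
      rw [sum_sum_mul_add_sq_eq_two_mul_dotProduct_mulVec hw_symm hs, hf, dotProduct_zero,
        mul_zero]
    have hterm := (sum_sum_eq_zero_iff_of_nonneg fun u v =>
      mul_nonneg (hw_nonneg u v) (sq_nonneg (f u + s * f v))).1 hsum u v
    exact pow_eq_zero_iff two_ne_zero |>.1 ((mul_eq_zero.1 hterm).resolve_left huv)
  · intro hf
    ext u
    rw [degW_add_smul_adjW_mulVec_apply]
    refine Finset.sum_eq_zero fun v _ => ?_
    by_cases huv : w u v = 0
    · rw [huv, zero_mul]
    · rw [hf u v huv, mul_zero]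

lemma rank_degW_sub_adjW_lt_rank_degW_add_adjW (hw_symm : ∀ u v, w u v = w v u)
    (hw_nonneg : ∀ u v, 0 ≤ w u v)
    (hnotbip : ¬ ∃ c : V → Bool, ∀ u v, w u v ≠ 0 → c u ≠ c v) :
    (degW w - adjW w).rank < (degW w + adjW w).rank := by
  have hkerL : LinearMap.ker (degW w - adjW w).mulVecLin =
      twistedFunctions (fun u v => w u v ≠ 0) 1 := by
    simpa [← sub_eq_add_neg] using ker_degW_add_smul_adjW hw_symm hw_nonneg (s := -1) (by norm_num)
  have hkerQ : LinearMap.ker (degW w + adjW w).mulVecLin =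
      twistedFunctions (fun u v => w u v ≠ 0) (-1) := by
    simpa using ker_degW_add_smul_adjW hw_symm hw_nonneg (s := 1) (by norm_num)
  apply rank_lt_rank_of_finrank_ker_lt
  rw [hkerL, hkerQ]
  exact finrank_twistedFunctions_neg_one_lt hnotbip

lemma trace_degW_ne_zero (hw_nonneg : ∀ u v, 0 ≤ w u v) (hw : w ≠ 0) : (degW w).trace ≠ 0 := by
  rw [degW, trace_diagonal]
  refine fun hsum => hw ?_
  ext u v
  exact (sum_sum_eq_zero_iff_of_nonneg hw_nonneg).1 hsum u v

end Laplacians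

/-- If the support graph of a weight function `w` is not bipartite, then the weighted signed
and signless Laplacians `L_w` and `Q_w` have different ranks; hence no unitary `U` conjugates
(the complexification of) `L_w` into `Q_w`, and the trace-normalized states are not unitarily
equivalent. -/
theorem weighted_lapL_lapQ_not_unitarily_equivalent {V : Type*} [Fintype V] [DecidableEq V]
    (w : V → V → ℝ)
    (hw_symm : ∀ u v, w u v = w v u) (hw_nonneg : ∀ u v, 0 ≤ w u v)
    (hw_diag : ∀ v, w v v = 0)
    (hnotbip : ¬ ∃ c : V → Bool, ∀ u v, w u v ≠ 0 → c u ≠ c v) :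
    (degW w - adjW w).rank ≠ (degW w + adjW w).rank ∧
    (¬ ∃ U : Matrix V V ℂ, star U * U = 1 ∧ U * star U = 1 ∧
        (degW w + adjW w).map (fun a => (a : ℂ)) =
          U * (degW w - adjW w).map (fun a => (a : ℂ)) * star U) ∧
    (¬ ∃ U : Matrix V V ℂ, star U * U = 1 ∧ U * star U = 1 ∧
        (((degW w + adjW w).map fun a => (a : ℂ)).trace)⁻¹ •
            ((degW w + adjW w).map fun a => (a : ℂ)) =
          U * ((((degW w - adjW w).map fun a => (a : ℂ)).trace)⁻¹ •
            ((degW w - adjW w).map fun a => (a : ℂ))) * star U) := by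
  have hrank := rank_degW_sub_adjW_lt_rank_degW_add_adjW hw_symm hw_nonneg hnotbip
  refine ⟨hrank.ne, ?_, ?_⟩
  · rintro ⟨U, hU, hU', hconj⟩
    exact hrank.ne' (rank_eq_of_smul_map_eq_mul_smul_map_mul Complex.ofRealHom
      one_ne_zero one_ne_zero (.of_mul_eq_one _ hU') (.of_mul_eq_one _ hU)
      (by simp only [one_smul]; exact hconj))
  · rintro ⟨U, hU, hU', hconj⟩
    have hw : w ≠ 0 := fun hw =>
      hnotbip ⟨fun _ => true, fun u v huv => absurd (congrFun₂ hw u v) huv⟩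
    have htrace : (degW w).trace ≠ 0 := trace_degW_ne_zero hw_nonneg hw
    have htraceL : (degW w - adjW w).trace ≠ 0 := by
      rwa [trace_sub, trace_adjW hw_diag, sub_zero]
    have htraceQ : (degW w + adjW w).trace ≠ 0 := by
      rwa [trace_add, trace_adjW hw_diag, add_zero]
    exact hrank.ne' (rank_eq_of_smul_map_eq_mul_smul_map_mul Complex.ofRealHom
      (inv_ne_zero (trace_map_ringHom_ne_zero Complex.ofRealHom htraceQ))
      (inv_ne_zero (trace_map_ringHom_ne_zero Complex.ofRealHom htraceL))
      (.of_mul_eq_one _ hU') (.of_mul_eq_one _ hU) hconj)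
end

section
/- Let (S_l, S_q) be a hybrid graph on a finite vertex type V satisfying the COI condition with coloring c : V → Bool. Then the vector v : V → ℝ defined by v(u) = 1 if c(u) = true and v(u) = −1 otherwise satisfies (L(S_l) + Q(S_q))·v = 0. In particular, every hybrid graph satisfying the NOI condition or the COI condition admits a vector with all entries in {−1, 1} in the kernel of its hybrid Laplacian. -/
open Matrix

-- Adjacency matrix of a simple graph, with real entries.
open scoped Classical in
noncomputable def adjM {V : Type*} [Fintype V] (G : SimpleGraph V) : Matrix V V ℝ :=
  Matrix.of fun u v => if G.Adj u v then 1 else 0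

-- Degree matrix of a simple graph: diagonal, with the vertex degrees on the diagonal.
open scoped Classical in
noncomputable def degM {V : Type*} [Fintype V] [DecidableEq V] (G : SimpleGraph V) :
    Matrix V V ℝ :=
  Matrix.diagonal fun v => ∑ u, if G.Adj v u then (1 : ℝ) else 0

/-- Signed Laplacian `L = D - A`. -/
noncomputable def lapL {V : Type*} [Fintype V] [DecidableEq V] (G : SimpleGraph V) :
    Matrix V V ℝ :=
  degM G - adjM G

/-- Signless Laplacian `Q = D + A`. -/
noncomputable def lapQ {V : Type*} [Fintype V] [DecidableEq V] (G : SimpleGraph V) :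
    Matrix V V ℝ :=
  degM G + adjM G

/-- The two subgraphs of a hybrid graph have disjoint edge sets. -/
def EdgeDisjoint {V : Type*} (Sl Sq : SimpleGraph V) : Prop :=
  ∀ u v, ¬ (Sl.Adj u v ∧ Sq.Adj u v)

/-- NOI condition: the `Q`-subgraph is bipartite and no vertex is incident both to an
`L`-edge and to a `Q`-edge. -/
def NOI {V : Type*} (Sl Sq : SimpleGraph V) : Prop :=
  (∃ c : V → Bool, ∀ u v, Sq.Adj u v → c u ≠ c v) ∧
  ∀ u, ¬ ((∃ x, Sl.Adj u x) ∧ (∃ x, Sq.Adj u x))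

/-- COI condition: there is a coloring proper for the `Q`-subgraph such that every
`L`-edge joins vertices of the same color. -/
def COI {V : Type*} (Sl Sq : SimpleGraph V) : Prop :=
  ∃ c : V → Bool, (∀ u v, Sq.Adj u v → c u ≠ c v) ∧ (∀ u v, Sl.Adj u v → c u = c v)

section Laplacian

variable {V : Type*} [Fintype V]

open scoped Classical in
theorem adjM_eq_adjMatrix (G : SimpleGraph V) : adjM G = G.adjMatrix ℝ := rfl

variable [DecidableEq V]

open scoped Classical in
theorem degM_eq_degMatrix (G : SimpleGraph V) : degM G = G.degMatrix ℝ := by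
  simp only [degM, SimpleGraph.degMatrix, G.degree_eq_sum_if_adj]

open scoped Classical in
theorem lapL_eq_lapMatrix (G : SimpleGraph V) : lapL G = G.lapMatrix ℝ := by
  rw [lapL, degM_eq_degMatrix, adjM_eq_adjMatrix, SimpleGraph.lapMatrix]

theorem lapL_mulVec_eq_zero_iff_forall_adj {G : SimpleGraph V} {x : V → ℝ} :
    lapL G *ᵥ x = 0 ↔ ∀ u w, G.Adj u w → x u = x w := by
  classical
  rw [lapL_eq_lapMatrix, SimpleGraph.lapMatrix_mulVec_eq_zero_iff_forall_adj]

open scoped Classical in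
theorem lapQ_mulVec_apply (G : SimpleGraph V) (x : V → ℝ) (u : V) :
    (lapQ G *ᵥ x) u = ∑ w ∈ G.neighborFinset u, (x u + x w) := by
  rw [lapQ, degM_eq_degMatrix, adjM_eq_adjMatrix, add_mulVec, Pi.add_apply,
    SimpleGraph.degMatrix_mulVec_apply, SimpleGraph.adjMatrix_mulVec_apply,
    Finset.sum_add_distrib, Finset.sum_const, SimpleGraph.card_neighborFinset_eq_degree,
    nsmul_eq_mul]

theorem lapQ_mulVec_eq_zero_of_forall_adj {G : SimpleGraph V} {x : V → ℝ}
    (hx : ∀ u w, G.Adj u w → x u = -x w) : lapQ G *ᵥ x = 0 := by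
  classical
  funext u
  rw [lapQ_mulVec_apply]
  refine Finset.sum_eq_zero fun w hw => ?_
  exact add_eq_zero_iff_eq_neg.mpr (hx u w ((G.mem_neighborFinset u w).mp hw))

end Laplacian

section ColorVector

variable {V : Type*}

/-- The `±1` vector of a two-coloring: `true` is sent to `1` and `false` to `-1`. -/
def colorVector (c : V → Bool) : V → ℝ := fun u => if c u then 1 else -1

theorem colorVector_eq_one_or_eq_neg_one (c : V → Bool) (u : V) :
    colorVector c u = 1 ∨ colorVector c u = -1 :=
  ite_eq_or_eq _ _ _

theorem colorVector_eq_of_eq {c : V → Bool} {u w : V} (h : c u = c w) :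
    colorVector c u = colorVector c w := by
  simp only [colorVector, h]

theorem colorVector_eq_neg_of_ne {c : V → Bool} {u w : V} (h : c u ≠ c w) :
    colorVector c u = -colorVector c w := by
  simp only [colorVector, Bool.eq_not_of_ne h]
  cases c w <;> simp

theorem lapL_add_lapQ_mulVec_colorVector [Fintype V] [DecidableEq V]
    {Sl Sq : SimpleGraph V} {c : V → Bool}
    (hq : ∀ u w, Sq.Adj u w → c u ≠ c w) (hl : ∀ u w, Sl.Adj u w → c u = c w) :
    (lapL Sl + lapQ Sq) *ᵥ colorVector c = 0 := by
  have hL : lapL Sl *ᵥ colorVector c = 0 :=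
    lapL_mulVec_eq_zero_iff_forall_adj.mpr fun u w huw => colorVector_eq_of_eq (hl u w huw)
  have hQ : lapQ Sq *ᵥ colorVector c = 0 :=
    lapQ_mulVec_eq_zero_of_forall_adj fun u w huw => colorVector_eq_neg_of_ne (hq u w huw)
  rw [add_mulVec, hL, hQ, add_zero]

end ColorVector

-- Recolor every vertex without `Sq`-edges by `true`: this includes both ends of each `Sl`-edge.
theorem NOI.coi {V : Type*} {Sl Sq : SimpleGraph V} (h : NOI Sl Sq) : COI Sl Sq := by
  classical
  obtain ⟨⟨c, hc⟩, not_both⟩ := h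
  have exists_Sq_edge {u w : V} (huw : Sq.Adj u w) : ∃ x, Sq.Adj u x := ⟨w, huw⟩
  have no_Sq_edge {u w : V} (huw : Sl.Adj u w) : ¬∃ x, Sq.Adj u x :=
    fun hu => not_both u ⟨⟨w, huw⟩, hu⟩
  refine ⟨fun u => if ∃ x, Sq.Adj u x then c u else true, fun u w huw => ?_, fun u w huw => ?_⟩
  · simpa only [if_pos (exists_Sq_edge huw), if_pos (exists_Sq_edge huw.symm)] using hc u w huw
  · simp only [if_neg (no_Sq_edge huw), if_neg (no_Sq_edge huw.symm)]

/-- For a hybrid graph satisfying the COI condition with coloring `c`, the `±1` vector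
associated to `c` lies in the kernel of the hybrid Laplacian `L(S_l) + Q(S_q)`. In
particular, every hybrid graph satisfying the NOI or the COI condition admits a `±1`
vector in the kernel of its hybrid Laplacian. -/
theorem hybrid_laplacian_pm_one_kernel_vector {V : Type*} [Fintype V] [DecidableEq V]
    (Sl Sq : SimpleGraph V) (hdisj : EdgeDisjoint Sl Sq) (c : V → Bool)
    (hq : ∀ u v, Sq.Adj u v → c u ≠ c v) (hl : ∀ u v, Sl.Adj u v → c u = c v) :
    (lapL Sl + lapQ Sq).mulVec (fun u => if c u then 1 else -1) = 0 ∧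
    ∀ Sl' Sq' : SimpleGraph V, EdgeDisjoint Sl' Sq' → (NOI Sl' Sq' ∨ COI Sl' Sq') →
      ∃ v : V → ℝ, (∀ u, v u = 1 ∨ v u = -1) ∧ (lapL Sl' + lapQ Sq').mulVec v = 0 := by
  refine ⟨lapL_add_lapQ_mulVec_colorVector hq hl, fun Sl' Sq' _ h => ?_⟩
  obtain ⟨c', hq', hl'⟩ : COI Sl' Sq' := h.elim NOI.coi id
  exact ⟨colorVector c', colorVector_eq_one_or_eq_neg_one c',
    lapL_add_lapQ_mulVec_colorVector hq' hl'⟩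
end

section
/- Sufficiency of the degree criterion: let m, n : ℕ, V = Fin m × Fin n, and let w_l, w_q be weight functions on V with disjoint supports. Define the weighted hybrid Laplacian 𝓛 = (D_{w_l} − A_{w_l}) + (D_{w_q} + A_{w_q}) and the partial-transposed weights w_l^Γ, w_q^Γ by w^Γ((i,j),(k,l)) = w((i,l),(k,j)). If D_{w_l} + D_{w_q} = D_{w_l^Γ} + D_{w_q^Γ}, then the partial transpose 𝓛^Γ equals (D_{w_l^Γ} − A_{w_l^Γ}) + (D_{w_q^Γ} + A_{w_q^Γ}) and is positive semidefinite. (This covers unweighted and weighted L-graphs, Q-graphs, and hybrid graphs as special cases.) -/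
open Matrix

/-- Partial transpose of a matrix indexed by the grid `Fin m × Fin n`. -/
def pt {m n : ℕ} (M : Matrix (Fin m × Fin n) (Fin m × Fin n) ℝ) :
    Matrix (Fin m × Fin n) (Fin m × Fin n) ℝ :=
  Matrix.of fun p q => M (p.1, q.2) (q.1, p.2)

/-- Partial transpose of a weight function on the grid:
`w^Γ((i,j),(k,l)) = w((i,l),(k,j))`. -/
def ptW {m n : ℕ} (w : Fin m × Fin n → Fin m × Fin n → ℝ) :
    Fin m × Fin n → Fin m × Fin n → ℝ :=
  fun p q => w (p.1, q.2) (q.1, p.2)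

/-!
The partial transpose fixes diagonal matrices and turns `A_w` into `A_{w^Γ}`, so the degree
condition is exactly what makes `𝓛^Γ` the hybrid Laplacian of the partially transposed weights.
A hybrid Laplacian has the form `D_w + A_a` with `w = w_l + w_q`, `a = w_q - w_l` and `|a| ≤ w`,
and twice its quadratic form at `x` is the sum over `u, v` of
`w u v (x_u² + x_v²) + 2 a u v x_u x_v`, each term being nonnegative.
-/

/-- The weighted hybrid Laplacian `𝓛` of the paper: the Laplacian of the L-edges, weighted by `wl`,
plus the signless Laplacian of the Q-edges, weighted by `wq`. -/
noncomputable def hybridLaplacian {V : Type*} [Fintype V] [DecidableEq V] (wl wq : V → V → ℝ) :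
    Matrix V V ℝ :=
  (degW wl - adjW wl) + (degW wq + adjW wq)

theorem mul_sq_add_sq_add_mul_nonneg {a w : ℝ} (h : |a| ≤ w) (s t : ℝ) :
    0 ≤ w * (s ^ 2 + t ^ 2) + a * (2 * (s * t)) := by
  obtain ⟨hneg, hpos⟩ := abs_le.mp h
  have hsum : 0 ≤ (w + a) * (s + t) ^ 2 := mul_nonneg (by linarith) (sq_nonneg _)
  have hdiff : 0 ≤ (w - a) * (s - t) ^ 2 := mul_nonneg (by linarith) (sq_nonneg _)
  linarith

section Weights

variable {V : Type*}

theorem isHermitian_adjW {w : V → V → ℝ} (hw : ∀ u v, w u v = w v u) : (adjW w).IsHermitian :=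
  Matrix.IsHermitian.ext fun u v => hw v u

variable [Fintype V]

theorem dotProduct_adjW_mulVec (w : V → V → ℝ) (x : V → ℝ) :
    x ⬝ᵥ adjW w *ᵥ x = ∑ u, ∑ v, w u v * (x u * x v) := by
  simp only [adjW, dotProduct, mulVec, of_apply, Finset.mul_sum, mul_left_comm]

variable [DecidableEq V]

theorem isHermitian_degW (w : V → V → ℝ) : (degW w).IsHermitian :=
  isHermitian_diagonal _

theorem degW_add (w₁ w₂ : V → V → ℝ) : degW (w₁ + w₂) = degW w₁ + degW w₂ := by
  simp only [degW, Pi.add_apply, Finset.sum_add_distrib, diagonal_add]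

theorem hybridLaplacian_eq_degW_add_adjW (wl wq : V → V → ℝ) :
    hybridLaplacian wl wq = degW (wl + wq) + adjW (wq - wl) := by
  have adjW_sub : adjW (wq - wl) = adjW wq - adjW wl := rfl
  rw [hybridLaplacian, degW_add, adjW_sub]
  abel

theorem dotProduct_degW_mulVec (w : V → V → ℝ) (x : V → ℝ) :
    x ⬝ᵥ degW w *ᵥ x = ∑ u, ∑ v, w u v * x u ^ 2 := by
  simp only [degW, dotProduct, mulVec_diagonal, ← Finset.sum_mul]
  exact Finset.sum_congr rfl fun u _ => by ring

theorem two_mul_dotProduct_degW_mulVec {w : V → V → ℝ} (hw : ∀ u v, w u v = w v u) (x : V → ℝ) :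
    2 * (x ⬝ᵥ degW w *ᵥ x) = ∑ u, ∑ v, w u v * (x u ^ 2 + x v ^ 2) := by
  have hswap : ∑ u, ∑ v, w u v * x u ^ 2 = ∑ u, ∑ v, w u v * x v ^ 2 := by
    rw [Finset.sum_comm]
    exact Finset.sum_congr rfl fun u _ => Finset.sum_congr rfl fun v _ => by rw [hw v u]
  simp only [mul_add, Finset.sum_add_distrib, ← hswap, dotProduct_degW_mulVec, two_mul]

theorem two_mul_dotProduct_degW_add_adjW_mulVec {w : V → V → ℝ} (hw : ∀ u v, w u v = w v u)
    (a : V → V → ℝ) (x : V → ℝ) :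
    2 * (x ⬝ᵥ (degW w + adjW a) *ᵥ x) =
      ∑ u, ∑ v, (w u v * (x u ^ 2 + x v ^ 2) + a u v * (2 * (x u * x v))) := by
  rw [add_mulVec, dotProduct_add, mul_add, two_mul_dotProduct_degW_mulVec hw,
    dotProduct_adjW_mulVec]
  simp only [Finset.sum_add_distrib, Finset.mul_sum, mul_left_comm]

theorem posSemidef_degW_add_adjW {w a : V → V → ℝ} (hw : ∀ u v, w u v = w v u)
    (ha : ∀ u v, a u v = a v u) (haw : ∀ u v, |a u v| ≤ w u v) :
    (degW w + adjW a).PosSemidef := by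
  refine .of_dotProduct_mulVec_nonneg ((isHermitian_degW w).add (isHermitian_adjW ha)) fun x => ?_
  have hform : 0 ≤ 2 * (x ⬝ᵥ (degW w + adjW a) *ᵥ x) := by
    rw [two_mul_dotProduct_degW_add_adjW_mulVec hw]
    exact Finset.sum_nonneg fun u _ => Finset.sum_nonneg fun v _ =>
      mul_sq_add_sq_add_mul_nonneg (haw u v) (x u) (x v)
  rw [star_trivial]
  linarith

theorem posSemidef_hybridLaplacian {wl wq : V → V → ℝ}
    (hwl_symm : ∀ u v, wl u v = wl v u) (hwl_nonneg : ∀ u v, 0 ≤ wl u v)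
    (hwq_symm : ∀ u v, wq u v = wq v u) (hwq_nonneg : ∀ u v, 0 ≤ wq u v) :
    (hybridLaplacian wl wq).PosSemidef := by
  rw [hybridLaplacian_eq_degW_add_adjW]
  refine posSemidef_degW_add_adjW (fun u v => ?_) (fun u v => ?_) fun u v => ?_
  · simp only [Pi.add_apply, hwl_symm u v, hwq_symm u v]
  · simp only [Pi.sub_apply, hwl_symm u v, hwq_symm u v]
  · have hl := hwl_nonneg u v
    have hq := hwq_nonneg u v
    simp only [Pi.add_apply, Pi.sub_apply, abs_le]
    constructor <;> linarith

end Weights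

section PartialTranspose

variable {m n : ℕ}

theorem pt_add (M N : Matrix (Fin m × Fin n) (Fin m × Fin n) ℝ) : pt (M + N) = pt M + pt N :=
  rfl

theorem pt_adjW (w : Fin m × Fin n → Fin m × Fin n → ℝ) : pt (adjW w) = adjW (ptW w) :=
  rfl

theorem pt_diagonal (d : Fin m × Fin n → ℝ) : pt (diagonal d) = diagonal d := by
  ext ⟨i, j⟩ ⟨k, l⟩
  simp only [pt, of_apply, diagonal_apply, Prod.mk.injEq]
  grind

theorem pt_degW (w : Fin m × Fin n → Fin m × Fin n → ℝ) : pt (degW w) = degW w :=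
  pt_diagonal _

theorem pt_hybridLaplacian {wl wq : Fin m × Fin n → Fin m × Fin n → ℝ}
    (hdeg : degW wl + degW wq = degW (ptW wl) + degW (ptW wq)) :
    pt (hybridLaplacian wl wq) = hybridLaplacian (ptW wl) (ptW wq) := by
  have ptW_sub : ptW (wq - wl) = ptW wq - ptW wl := rfl
  calc
    pt (hybridLaplacian wl wq) = degW wl + degW wq + adjW (ptW (wq - wl)) := by
      rw [hybridLaplacian_eq_degW_add_adjW, pt_add, pt_degW, pt_adjW, degW_add]
    _ = degW (ptW wl) + degW (ptW wq) + adjW (ptW wq - ptW wl) := by rw [hdeg, ptW_sub]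
    _ = hybridLaplacian (ptW wl) (ptW wq) := by rw [hybridLaplacian_eq_degW_add_adjW, degW_add]

end PartialTranspose

theorem degree_criterion_sufficient_general {m n : ℕ}
    {wl wq : Fin m × Fin n → Fin m × Fin n → ℝ}
    (hwl_symm : ∀ u v, wl u v = wl v u) (hwl_nonneg : ∀ u v, 0 ≤ wl u v)
    (hwq_symm : ∀ u v, wq u v = wq v u) (hwq_nonneg : ∀ u v, 0 ≤ wq u v)
    (hdeg : degW wl + degW wq = degW (ptW wl) + degW (ptW wq)) :
    pt (hybridLaplacian wl wq) = hybridLaplacian (ptW wl) (ptW wq) ∧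
      (pt (hybridLaplacian wl wq)).PosSemidef := by
  refine ⟨pt_hybridLaplacian hdeg, ?_⟩
  rw [pt_hybridLaplacian hdeg]
  exact posSemidef_hybridLaplacian (fun _ _ => hwl_symm _ _) (fun _ _ => hwl_nonneg _ _)
    (fun _ _ => hwq_symm _ _) (fun _ _ => hwq_nonneg _ _)

/-- Sufficiency of the degree criterion: if the degree matrix of a weighted hybrid graph
equals the degree matrix of its partial transpose, then the partial transpose of the hybrid
Laplacian equals the hybrid Laplacian of the partial-transposed weights, and it is positive
semidefinite. -/
theorem degree_criterion_sufficient (m n : ℕ)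
    (wl wq : Fin m × Fin n → Fin m × Fin n → ℝ)
    (hwl_symm : ∀ u v, wl u v = wl v u) (hwl_nonneg : ∀ u v, 0 ≤ wl u v)
    (hwl_diag : ∀ v, wl v v = 0)
    (hwq_symm : ∀ u v, wq u v = wq v u) (hwq_nonneg : ∀ u v, 0 ≤ wq u v)
    (hwq_diag : ∀ v, wq v v = 0)
    (hdisj : ∀ u v, ¬ (wl u v ≠ 0 ∧ wq u v ≠ 0))
    (hdeg : degW wl + degW wq = degW (ptW wl) + degW (ptW wq)) :
    pt ((degW wl - adjW wl) + (degW wq + adjW wq)) =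
      (degW (ptW wl) - adjW (ptW wl)) + (degW (ptW wq) + adjW (ptW wq)) ∧
    (pt ((degW wl - adjW wl) + (degW wq + adjW wq))).PosSemidef :=
  degree_criterion_sufficient_general hwl_symm hwl_nonneg hwq_symm hwq_nonneg hdeg
end
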